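/- If a and b are terms of Λ of the same type and a = b is not provable in Λ, then for every two terms e and f of the same type one can construct type-instances a′ of a and b′ of b, closed terms h₁, …, h_l (l ≥ 0), and find variables x₁, …, x_m (m ≥ 0), such that (λx₁…x_m.a′)h₁…h_l e f = e and (λx₁…x_m.b′)h₁…h_l e f = f are both provable in Λ. -/

import Mathlib

set_option autoImplicit false

/-- Simple types over a set `ν` of atomic types. -/
inductive Ty (ν : Type) : Type
  | atom : ν → Ty ν
  | arrow : Ty ν → Ty ν → Ty ν

/-- A typing context: the (types of the) free variables. -/
abbrev Ctx (ν : Type) : Type := List (Ty ν)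

/-- Typed de Bruijn variables. -/
inductive Var {ν : Type} : Ctx ν → Ty ν → Type
  | vz {Γ : Ctx ν} {A : Ty ν} : Var (A :: Γ) A
  | vs {Γ : Ctx ν} {A B : Ty ν} : Var Γ A → Var (B :: Γ) A

/-- Typed terms of the simply typed lambda calculus Λ. -/
inductive Tm {ν : Type} : Ctx ν → Ty ν → Type
  | var {Γ : Ctx ν} {A : Ty ν} : Var Γ A → Tm Γ A
  | app {Γ : Ctx ν} {A B : Ty ν} : Tm Γ (Ty.arrow A B) → Tm Γ A → Tm Γ B
  | lam {Γ : Ctx ν} {A B : Ty ν} : Tm (A :: Γ) B → Tm Γ (Ty.arrow A B)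

/-- Renamings between contexts. -/
def Ren {ν : Type} (Γ Δ : Ctx ν) : Type := ∀ A : Ty ν, Var Γ A → Var Δ A

def Ren.ext {ν : Type} {Γ Δ : Ctx ν} (ρ : Ren Γ Δ) (A : Ty ν) : Ren (A :: Γ) (A :: Δ) :=
  fun _ v => match v with
  | .vz => .vz
  | .vs w => .vs (ρ _ w)

def Tm.rename {ν : Type} : ∀ {Γ Δ : Ctx ν} {A : Ty ν}, Ren Γ Δ → Tm Γ A → Tm Δ A
  | _, _, _, ρ, .var v => .var (ρ _ v)
  | _, _, _, ρ, .app f a => .app (f.rename ρ) (a.rename ρ)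
  | _, _, _, ρ, .lam b => .lam (b.rename (ρ.ext _))

/-- Simultaneous substitutions. -/
def Subst {ν : Type} (Γ Δ : Ctx ν) : Type := ∀ A : Ty ν, Var Γ A → Tm Δ A

def Subst.ext {ν : Type} {Γ Δ : Ctx ν} (σ : Subst Γ Δ) (A : Ty ν) :
    ∀ B : Ty ν, Var (A :: Γ) B → Tm (A :: Δ) B
  | _, .vz => .var .vz
  | _, .vs w => (σ _ w).rename (fun _ => Var.vs)

def Tm.subst {ν : Type} : ∀ {Γ Δ : Ctx ν} {A : Ty ν}, Subst Γ Δ → Tm Γ A → Tm Δ A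
  | _, _, _, σ, .var v => σ _ v
  | _, _, _, σ, .app f a => .app (f.subst σ) (a.subst σ)
  | _, _, _, σ, .lam b => .lam (b.subst (Subst.ext σ _))

/-- Extending a substitution with a term for the last variable. -/
def Subst.cons {ν : Type} {Γ Δ : Ctx ν} {A : Ty ν} (b : Tm Δ A) (σ : Subst Γ Δ) :
    ∀ B : Ty ν, Var (A :: Γ) B → Tm Δ B
  | _, .vz => b
  | _, .vs w => σ _ w

/-- Substitution of a single term for the last variable: `a[b/x]`. -/
def Tm.subst1 {ν : Type} {Γ : Ctx ν} {A B : Ty ν} (a : Tm (A :: Γ) B) (b : Tm Γ A) : Tm Γ B :=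
  a.subst (Subst.cons b (fun _ v => .var v))

/-- The theory Λ of βη-equality. -/
inductive Eqv {ν : Type} : ∀ {Γ : Ctx ν} {A : Ty ν}, Tm Γ A → Tm Γ A → Prop
  | refl {Γ : Ctx ν} {A : Ty ν} (a : Tm Γ A) : Eqv a a
  | symm {Γ : Ctx ν} {A : Ty ν} {a b : Tm Γ A} : Eqv a b → Eqv b a
  | trans {Γ : Ctx ν} {A : Ty ν} {a b c : Tm Γ A} : Eqv a b → Eqv b c → Eqv a c
  | congApp {Γ : Ctx ν} {A B : Ty ν} {f g : Tm Γ (Ty.arrow A B)} {a b : Tm Γ A} :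
      Eqv f g → Eqv a b → Eqv (.app f a) (.app g b)
  | congLam {Γ : Ctx ν} {A B : Ty ν} {a b : Tm (A :: Γ) B} :
      Eqv a b → Eqv (.lam a) (.lam b)
  | beta {Γ : Ctx ν} {A B : Ty ν} (a : Tm (A :: Γ) B) (b : Tm Γ A) :
      Eqv (.app (.lam a) b) (a.subst1 b)
  | eta {Γ : Ctx ν} {A B : Ty ν} (a : Tm Γ (Ty.arrow A B)) :
      Eqv (.lam (.app (a.rename (fun _ => Var.vs)) (.var .vz))) a

/-- Substitution of types for the atomic types, on types. -/
def Ty.substA {ν : Type} (σ : ν → Ty ν) : Ty ν → Ty ν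
  | .atom v => σ v
  | .arrow A B => .arrow (A.substA σ) (B.substA σ)

def Var.substA {ν : Type} (σ : ν → Ty ν) :
    ∀ {Γ : Ctx ν} {A : Ty ν}, Var Γ A → Var (Γ.map (Ty.substA σ)) (A.substA σ)
  | _, _, .vz => .vz
  | _, _, .vs v => .vs (v.substA σ)

/-- Substitution of types for the atomic types, on terms: type-instances. -/
def Tm.substA {ν : Type} (σ : ν → Ty ν) :
    ∀ {Γ : Ctx ν} {A : Ty ν}, Tm Γ A → Tm (Γ.map (Ty.substA σ)) (A.substA σ)
  | _, _, .var v => .var (v.substA σ)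
  | _, _, .app f a => .app (f.substA σ) (a.substA σ)
  | _, _, .lam b => .lam (b.substA σ)

/-- `Ty.arrs [A₁, …, Aₘ] B = Aₘ → (… → (A₁ → B))` : the type of `λx₁…xₘ.a`. -/
def Ty.arrs {ν : Type} : Ctx ν → Ty ν → Ty ν
  | [], B => B
  | A :: Γ, B => Ty.arrs Γ (Ty.arrow A B)

/-- λ-abstracting all the free variables of a term. -/
def Tm.lamAll {ν : Type} : ∀ {Γ : Ctx ν} {A : Ty ν}, Tm Γ A → Tm [] (Ty.arrs Γ A)
  | [], _, a => a
  | _ :: Γ, _, a => Tm.lamAll (Γ := Γ) (Tm.lam a)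

/-- `Ty.arrsR [B₁, …, Bₙ] C = B₁ → (… → (Bₙ → C))`. -/
def Ty.arrsR {ν : Type} : List (Ty ν) → Ty ν → Ty ν
  | [], C => C
  | B :: Bs, C => Ty.arrow B (Ty.arrsR Bs C)

/-- A list of terms `h₁ : B₁, …, hₙ : Bₙ` in context `Δ`. -/
inductive HList {ν : Type} (Δ : Ctx ν) : List (Ty ν) → Type
  | nil : HList Δ []
  | cons {B : Ty ν} {Bs : List (Ty ν)} : Tm Δ B → HList Δ Bs → HList Δ (B :: Bs)

/-- Iterated application `t h₁ … hₙ`. -/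
def HList.apps {ν : Type} {Δ : Ctx ν} :
    ∀ {Bs : List (Ty ν)} {C : Ty ν}, HList Δ Bs → Tm Δ (Ty.arrsR Bs C) → Tm Δ C
  | _, _, .nil, t => t
  | _, _, .cons h hs, t => HList.apps hs (t.app h)

/-- Iterated application `t h₁ … hₙ`. -/
def Tm.apps {ν : Type} {Δ : Ctx ν} {Bs : List (Ty ν)} {C : Ty ν}
    (t : Tm Δ (Ty.arrsR Bs C)) (hs : HList Δ Bs) : Tm Δ C :=
  hs.apps t

/-- Weakening of a closed term into an arbitrary context. -/
def Var.elim0 {ν : Type} {A : Ty ν} {C : Sort*} : Var ([] : Ctx ν) A → C :=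
  fun v => nomatch v

def Tm.wk {ν : Type} {Δ : Ctx ν} {A : Ty ν} (t : Tm ([] : Ctx ν) A) : Tm Δ A :=
  t.rename (fun _ v => v.elim0)
/-!
Two terms that are not βη-equal are separated by a finite full type structure: long normal forms
can be read back from their values once the base set consists of the maps from a sufficiently large
finite set of variable names to a finite algebra in which the codes of the two normal forms differ.

Such a type structure over a set with `n` elements is represented by closed terms after the type
instance that replaces every atomic type by `D → ⋯ → D → D` with `n` arguments, the elements of the
base set becoming the `n` projections. Every element of the type structure is then definable, since
a term can distinguish the representatives of distinct elements. Closed arguments that separate the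
values of the two terms thus reduce the terms to distinct projections, and `n` further arguments,
chosen among `λx y. x` and `λx y. y`, finish the proof.
-/

variable {ν : Type} {Γ Δ Θ : Ctx ν} {A B C : Ty ν}

/-! ### Substitution calculus -/

-- `Subst.ext` and `Subst.cons` are stated with the unfolded type, which `rw` and `simp` must match.
attribute [reducible] Ren Subst

theorem Ren.ext_comp (ρ : Ren Γ Δ) (ρ' : Ren Δ Θ) (A : Ty ν) :
    (fun B v => ρ'.ext A B (ρ.ext A B v)) = Ren.ext (fun B v => ρ' B (ρ B v)) A := by
  funext B v
  cases v <;> rfl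

theorem Subst.ext_var (A : Ty ν) :
    Subst.ext (fun (B : Ty ν) (v : Var Γ B) => Tm.var v) A = fun _ v => .var v := by
  funext B v
  cases v <;> rfl

theorem Subst.ext_comp_ren (ρ : Ren Γ Δ) (σ : Subst Δ Θ) (A : Ty ν) :
    (fun B v => Subst.ext σ A B (ρ.ext A B v)) = Subst.ext (fun B v => σ B (ρ B v)) A := by
  funext B v
  cases v <;> rfl

namespace Tm

theorem rename_rename (t : Tm Γ A) (ρ : Ren Γ Δ) (ρ' : Ren Δ Θ) :
    (t.rename ρ).rename ρ' = t.rename fun B v => ρ' B (ρ B v) := by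
  induction t generalizing Δ Θ with
  | var v => rfl
  | app f a ihf iha => simp only [rename, ihf, iha]
  | lam b ih => simp only [rename, ih, Ren.ext_comp]

theorem subst_var (t : Tm Γ A) : (t.subst fun _ v => .var v) = t := by
  induction t with
  | var v => rfl
  | app f a ihf iha => simp only [subst, ihf, iha]
  | lam b ih => simp only [subst, Subst.ext_var, ih]

theorem subst_rename (t : Tm Γ A) (ρ : Ren Γ Δ) (σ : Subst Δ Θ) :
    (t.rename ρ).subst σ = t.subst fun B v => σ B (ρ B v) := by
  induction t generalizing Δ Θ with
  | var v => rfl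
  | app f a ihf iha => simp only [rename, subst, ihf, iha]
  | lam b ih => simp only [rename, subst, ih, Subst.ext_comp_ren]

end Tm

theorem Subst.rename_ext (σ : Subst Γ Δ) (ρ : Ren Δ Θ) (A : Ty ν) :
    (fun B v => (Subst.ext σ A B v).rename (ρ.ext A))
      = Subst.ext (fun B v => (σ B v).rename ρ) A := by
  funext B v
  cases v with
  | vz => rfl
  | vs w =>
    simp only [Subst.ext, Tm.rename_rename]
    rfl

theorem Tm.rename_subst (t : Tm Γ A) (σ : Subst Γ Δ) (ρ : Ren Δ Θ) :
    (t.subst σ).rename ρ = t.subst fun B v => (σ B v).rename ρ := by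
  induction t generalizing Δ Θ with
  | var v => rfl
  | app f a ihf iha => simp only [rename, subst, ihf, iha]
  | lam b ih => simp only [rename, subst, ih, Subst.rename_ext]

theorem Subst.subst_ext (σ : Subst Γ Δ) (τ : Subst Δ Θ) (A : Ty ν) :
    (fun B v => (Subst.ext σ A B v).subst (Subst.ext τ A))
      = Subst.ext (fun B v => (σ B v).subst τ) A := by
  funext B v
  cases v with
  | vz => rfl
  | vs w => simp only [Subst.ext, Tm.subst_rename, Tm.rename_subst]

namespace Tm

theorem subst_subst (t : Tm Γ A) (σ : Subst Γ Δ) (τ : Subst Δ Θ) :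
    (t.subst σ).subst τ = t.subst fun B v => (σ B v).subst τ := by
  induction t generalizing Δ Θ with
  | var v => rfl
  | app f a ihf iha => simp only [subst, ihf, iha]
  | lam b ih => simp only [subst, ih, Subst.subst_ext]

theorem rename_eq_subst (t : Tm Γ A) (ρ : Ren Γ Δ) :
    t.rename ρ = t.subst fun B v => .var (ρ B v) := by
  conv_lhs => rw [← t.subst_var, rename_subst]
  rfl

theorem rename_id (t : Tm Γ A) : (t.rename fun _ v => v) = t := by
  rw [rename_eq_subst, subst_var]

theorem weaken_subst_ext (t : Tm Γ A) (σ : Subst Γ Δ) :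
    (t.rename fun _ => Var.vs (B := B)).subst (Subst.ext σ B)
      = (t.subst σ).rename fun _ => Var.vs := by
  rw [subst_rename, rename_subst]
  rfl

theorem subst1_weaken (t : Tm Γ A) (s : Tm Γ B) : (t.rename fun _ => Var.vs).subst1 s = t := by
  rw [subst1, subst_rename]
  exact t.subst_var

theorem subst1_subst_ext (b : Tm (A :: Γ) B) (σ : Subst Γ Δ) (s : Tm Δ A) :
    (b.subst (Subst.ext σ A)).subst1 s = b.subst (Subst.cons s σ) := by
  rw [subst1, subst_subst]
  congr 1
  funext B v
  cases v with
  | vz => rfl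
  | vs w => exact subst1_weaken _ _

theorem subst1_rename_ext (b : Tm (A :: Γ) B) (ρ : Ren Γ Δ) (s : Tm Γ A) :
    (b.rename (ρ.ext A)).subst1 (s.rename ρ) = (b.subst1 s).rename ρ := by
  rw [subst1, subst1, subst_rename, rename_subst]
  congr 1
  funext B v
  cases v <;> rfl

end Tm

/-! ### βη-equality -/

attribute [refl] Eqv.refl
attribute [symm] Eqv.symm
attribute [trans] Eqv.trans

instance : Trans (@Eqv ν Γ A) (@Eqv ν Γ A) (@Eqv ν Γ A) := ⟨Eqv.trans⟩

namespace Eqv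

theorem app_left {f g : Tm Γ (.arrow A B)} (h : Eqv f g) (a : Tm Γ A) :
    Eqv (f.app a) (g.app a) :=
  congApp h (refl a)

theorem app_right (f : Tm Γ (.arrow A B)) {a b : Tm Γ A} (h : Eqv a b) :
    Eqv (f.app a) (f.app b) :=
  congApp (refl f) h

theorem beta_of_eq {b : Tm (A :: Γ) B} {a : Tm Γ A} {t : Tm Γ B} (h : b.subst1 a = t) :
    Eqv (b.lam.app a) t :=
  h ▸ beta b a

theorem lam_weaken_app (t : Tm Γ B) (a : Tm Γ A) :
    Eqv (Tm.app (.lam (t.rename fun _ => Var.vs)) a) t :=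
  beta_of_eq (t.subst1_weaken a)

theorem rename {a b : Tm Γ A} (h : Eqv a b) (ρ : Ren Γ Δ) : Eqv (a.rename ρ) (b.rename ρ) := by
  induction h generalizing Δ with
  | refl a => rfl
  | symm _ ih => exact (ih ρ).symm
  | trans _ _ ih₁ ih₂ => exact (ih₁ ρ).trans (ih₂ ρ)
  | congApp _ _ ihf iha => exact congApp (ihf ρ) (iha ρ)
  | congLam _ ih => exact congLam (ih _)
  | beta b a => exact beta_of_eq (b.subst1_rename_ext ρ a)
  | eta a =>
    have h := eta (a.rename ρ)
    rw [Tm.rename_rename] at h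
    simp only [Tm.rename, Tm.rename_rename]
    exact h

end Eqv

/-! ### Long normal forms -/

namespace Tm

mutual

/-- Neutral terms: a variable applied to long normal forms. -/
inductive IsNeutral : ∀ {Γ : Ctx ν} {A : Ty ν}, Tm Γ A → Prop
  | var {Γ : Ctx ν} {A : Ty ν} (v : Var Γ A) : IsNeutral (.var v)
  | app {Γ : Ctx ν} {A B : Ty ν} {f : Tm Γ (.arrow A B)} {a : Tm Γ A} :
      IsNeutral f → IsNormal a → IsNeutral (f.app a)

/-- Long normal forms: β-normal and η-expanded, as neutral terms count only at atomic types. -/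
inductive IsNormal : ∀ {Γ : Ctx ν} {A : Ty ν}, Tm Γ A → Prop
  | neutral {Γ : Ctx ν} {p : ν} {t : Tm Γ (.atom p)} : IsNeutral t → IsNormal t
  | lam {Γ : Ctx ν} {A B : Ty ν} {b : Tm (A :: Γ) B} : IsNormal b → IsNormal b.lam

end

mutual

theorem IsNeutral.rename {Γ Δ : Ctx ν} {A : Ty ν} {t : Tm Γ A} (ρ : Ren Γ Δ) :
    IsNeutral t → IsNeutral (t.rename ρ)
  | .var _ => .var _
  | .app hf ha => .app (hf.rename ρ) (ha.rename ρ)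

theorem IsNormal.rename {Γ Δ : Ctx ν} {A : Ty ν} {t : Tm Γ A} (ρ : Ren Γ Δ) :
    IsNormal t → IsNormal (t.rename ρ)
  | .neutral h => .neutral (h.rename ρ)
  | .lam h => .lam (h.rename _)

end

/-- Tait's reducibility predicate for normalization, monotone in the context by definition. -/
def Reducible : ∀ {A : Ty ν} {Γ : Ctx ν}, Tm Γ A → Prop
  | .atom _, _, t => ∃ n, IsNeutral n ∧ Eqv t n
  | .arrow A _, Γ, t =>
    ∀ (Δ : Ctx ν) (ρ : Ren Γ Δ) (s : Tm Δ A), Reducible s → Reducible ((t.rename ρ).app s)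

namespace Reducible

theorem of_eqv {t t' : Tm Γ A} (e : Eqv t t') (h : Reducible t) : Reducible t' := by
  induction A generalizing Γ with
  | atom =>
    obtain ⟨n, hn, htn⟩ := h
    exact ⟨n, hn, e.symm.trans htn⟩
  | arrow A B _ ih => exact fun Δ ρ s hs => ih ((e.rename ρ).app_left s) (h Δ ρ s hs)

theorem rename {t : Tm Γ A} (h : Reducible t) (ρ : Ren Γ Δ) : Reducible (t.rename ρ) := by
  cases A with
  | atom =>
    obtain ⟨n, hn, htn⟩ := h
    exact ⟨n.rename ρ, hn.rename ρ, htn.rename ρ⟩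
  | arrow A B =>
    intro Θ ρ' s hs
    rw [rename_rename]
    exact h Θ _ s hs

end Reducible

mutual

theorem Reducible.exists_isNormal : ∀ {A : Ty ν} {Γ : Ctx ν} {t : Tm Γ A},
    Reducible t → ∃ n, IsNormal n ∧ Eqv t n
  | .atom _, _, _, ⟨n, hn, htn⟩ => ⟨n, .neutral hn, htn⟩
  | .arrow _ _, _, t, h =>
    have ⟨n, hn, htn⟩ := (h _ (fun _ => Var.vs) _ (IsNeutral.var .vz).reducible).exists_isNormal
    ⟨n.lam, .lam hn, (Eqv.eta t).symm.trans (.congLam htn)⟩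

theorem IsNeutral.reducible : ∀ {A : Ty ν} {Γ : Ctx ν} {t : Tm Γ A}, IsNeutral t → Reducible t
  | .atom _, _, t, h => ⟨t, h, .refl t⟩
  | .arrow _ _, _, _, h => fun _ ρ _ hs =>
    have ⟨_, hn, hsn⟩ := hs.exists_isNormal
    (IsNeutral.app (h.rename ρ) hn).reducible.of_eqv (.app_right _ hsn.symm)

end

theorem Reducible.subst (t : Tm Γ A) {σ : Subst Γ Δ} (hσ : ∀ B v, Reducible (σ B v)) :
    Reducible (t.subst σ) := by
  induction t generalizing Δ with
  | var v => exact hσ _ v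
  | app f a ihf iha =>
    have h := ihf hσ Δ (fun _ v => v) _ (iha hσ)
    rwa [rename_id] at h
  | lam b ih =>
    intro Θ ρ s hs
    have hb : Reducible (b.subst (Subst.cons s fun B v => (σ B v).rename ρ)) := by
      refine ih fun B v => ?_
      cases v with
      | vz => exact hs
      | vs w => exact (hσ _ w).rename ρ
    rw [rename_subst]
    exact hb.of_eqv (Eqv.beta_of_eq (subst1_subst_ext _ _ _)).symm

theorem exists_isNormal_eqv (t : Tm Γ A) : ∃ n, IsNormal n ∧ Eqv t n := by
  have h := Reducible.subst t fun _ v => (IsNeutral.var v).reducible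
  rw [subst_var] at h
  exact h.exists_isNormal

end Tm

/-! ### Full type structures -/

/-- The full type structure over `X`, all atomic types being interpreted by `X`. -/
def Sem (X : Type*) : Ty ν → Type _
  | .atom _ => X
  | .arrow A B => Sem X A → Sem X B

/-- Valuations of the variables of a context in the full type structure over `X`. -/
abbrev Env (X : Type*) (Γ : Ctx ν) : Type _ := ∀ A : Ty ν, Var Γ A → Sem X A

section Semantics

variable {X : Type*}

instance Sem.instFinite [Finite X] : ∀ A : Ty ν, Finite (Sem X A)
  | .atom _ => ‹Finite X›
  | .arrow A B =>
    have := Sem.instFinite A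
    have := Sem.instFinite B
    inferInstanceAs (Finite (Sem X A → Sem X B))

instance Sem.instNonempty [Nonempty X] : ∀ A : Ty ν, Nonempty (Sem X A)
  | .atom _ => ‹Nonempty X›
  | .arrow A B =>
    have := Sem.instNonempty B
    inferInstanceAs (Nonempty (Sem X A → Sem X B))

/-- Extension of a valuation by a value for the last variable. -/
def Env.cons (d : Sem X A) (ρ : Env X Γ) : Env X (A :: Γ)
  | _, .vz => d
  | _, .vs w => ρ _ w

/-- The value of a term. -/
def Tm.eval : ∀ {Γ : Ctx ν} {A : Ty ν}, Tm Γ A → Env X Γ → Sem X A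
  | _, _, .var v, ρ => ρ _ v
  | _, _, .app f a, ρ => (f.eval ρ : Sem X _ → Sem X _) (a.eval ρ)
  | _, _, .lam b, ρ => fun d => b.eval (Env.cons d ρ)

namespace Tm

theorem eval_rename (t : Tm Γ A) (r : Ren Γ Δ) (ρ : Env X Δ) :
    (t.rename r).eval ρ = t.eval fun B v => ρ B (r B v) := by
  induction t generalizing Δ with
  | var v => rfl
  | app f a ihf iha => simp only [rename, eval, ihf, iha]
  | lam b ih =>
    simp only [rename, eval, ih]
    funext d
    congr 1
    funext B v
    cases v <;> rfl

theorem eval_subst (t : Tm Γ A) (σ : Subst Γ Δ) (ρ : Env X Δ) :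
    (t.subst σ).eval ρ = t.eval fun B v => (σ B v).eval ρ := by
  induction t generalizing Δ with
  | var v => rfl
  | app f a ihf iha => simp only [subst, eval, ihf, iha]
  | lam b ih =>
    simp only [subst, eval, ih]
    funext d
    congr 1
    funext B v
    cases v with
    | vz => rfl
    | vs w => exact eval_rename _ _ _

theorem eval_subst1 (b : Tm (A :: Γ) B) (a : Tm Γ A) (ρ : Env X Γ) :
    (b.subst1 a).eval ρ = b.eval (Env.cons (a.eval ρ) ρ) := by
  rw [subst1, eval_subst]
  congr 1
  funext B v
  cases v <;> rfl

end Tm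

theorem Eqv.eval_eq {a b : Tm Γ A} (h : Eqv a b) (ρ : Env X Γ) : a.eval ρ = b.eval ρ := by
  induction h with
  | refl a => rfl
  | symm _ ih => exact (ih ρ).symm
  | trans _ _ ih₁ ih₂ => exact (ih₁ ρ).trans (ih₂ ρ)
  | congApp _ _ ihf iha => simp only [Tm.eval, ihf, iha]
  | congLam _ ih => exact funext fun d => ih _
  | beta b a => exact (b.eval_subst1 a ρ).symm
  | eta a => exact funext fun d => congrFun (a.eval_rename _ _) d

end Semantics

/-! ### Codes of terms -/

/-- Codes of terms, with variables named by de Bruijn levels so that weakening a term leaves its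
code unchanged; applications record the type of the argument. -/
inductive Code (ν : Type) : Type
  | var : ℕ → Code ν
  | app : Ty ν → Code ν → Code ν → Code ν
  | lam : Code ν → Code ν

/-- The de Bruijn level of a variable: its position counted from the outer end of the context. -/
def Var.level : ∀ {Γ : Ctx ν} {A : Ty ν}, Var Γ A → ℕ
  | _ :: Γ, _, .vz => Γ.length
  | _, _, .vs v => v.level

theorem Var.level_lt_length (v : Var Γ A) : v.level < Γ.length := by
  induction v with
  | vz => exact Nat.lt_succ_self _
  | vs v ih => exact ih.trans (Nat.lt_succ_self _)

theorem Var.level_injective : Function.Injective (level : Var Γ A → ℕ) := by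
  intro v w h
  induction v with
  | vz =>
    cases w with
    | vz => rfl
    | vs w => exact absurd h w.level_lt_length.ne'
  | vs v ih =>
    cases w with
    | vz => exact absurd h v.level_lt_length.ne
    | vs w => rw [ih h]

/-- The code of a term. -/
def Tm.code : ∀ {Γ : Ctx ν} {A : Ty ν}, Tm Γ A → Code ν
  | _, _, .var v => .var v.level
  | _, _, .app (A := A) f a => .app A f.code a.code
  | _, _, .lam b => .lam b.code

theorem Tm.code_injective : Function.Injective (code : Tm Γ A → Code ν) := by
  intro t s h
  induction t with
  | var v =>
    cases s with
    | var w => rw [Var.level_injective (Code.var.inj h)]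
    | app f a => cases h
    | lam b => cases h
  | app f a ihf iha =>
    cases s with
    | var w => cases h
    | app g b =>
      obtain ⟨rfl, hf, ha⟩ := Code.app.inj h
      rw [ihf hf, iha ha]
    | lam b => cases h
  | lam b ih =>
    cases s with
    | var w => cases h
    | app f a => cases h
    | lam c => rw [ih (Code.lam.inj h)]

/-- Algebras `Q` for the signature of codes, in which variables are named by the elements of `J`;
the level `n` is sent to the numeral `n` of `J`. -/
structure CodeAlgebra (ν : Type) (J Q : Type*) where
  var : J → Q
  app : Ty ν → Q → Q → Q
  lam : Q → Q

/-- The value of a code in an algebra. -/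
def CodeAlgebra.fold {J Q : Type*} [NatCast J] (M : CodeAlgebra ν J Q) : Code ν → Q
  | .var n => M.var n
  | .app A s t => M.app A (M.fold s) (M.fold t)
  | .lam t => M.lam (M.fold t)

namespace Code

/-- The subterms of a code. -/
def subterms : Code ν → Set (Code ν)
  | .var n => {.var n}
  | .app A s t => insert (.app A s t) (s.subterms ∪ t.subterms)
  | .lam t => insert (.lam t) t.subterms

theorem mem_subterms_self (t : Code ν) : t ∈ t.subterms := by
  cases t <;> simp [subterms]

theorem finite_subterms (t : Code ν) : t.subterms.Finite := by
  induction t with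
  | var n => exact Set.finite_singleton _
  | app A s t ihs iht => exact (ihs.union iht).insert _
  | lam t ih => exact ih.insert _

theorem subterms_subset_of_mem {s t : Code ν} (h : s ∈ t.subterms) :
    s.subterms ⊆ t.subterms := by
  induction t with
  | var n => rw [Set.mem_singleton_iff.1 h]
  | app A t₁ t₂ ih₁ ih₂ =>
    rcases h with rfl | h | h
    · rfl
    · exact (ih₁ h).trans (Set.subset_union_left.trans (Set.subset_insert _ _))
    · exact (ih₂ h).trans (Set.subset_union_right.trans (Set.subset_insert _ _))
  | lam t ih =>
    rcases h with rfl | h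
    · rfl
    · exact (ih h).trans (Set.subset_insert _ _)

open Classical in
/-- The code `t` as an element of `S`, or `none` if it does not belong to `S`. -/
noncomputable def restrict (S : Set (Code ν)) (t : Code ν) : Option S :=
  if h : t ∈ S then some ⟨t, h⟩ else none

theorem restrict_of_mem {S : Set (Code ν)} {t : Code ν} (h : t ∈ S) :
    restrict S t = some ⟨t, h⟩ :=
  dif_pos h

/-- The algebra of the codes in `S`, all others being identified with `none`, with variables named
by residues modulo `k`. -/
noncomputable def restrictAlgebra (S : Set (Code ν)) (k : ℕ) :
    CodeAlgebra ν (ZMod k) (Option S) where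
  var j := restrict S (.var j.val)
  app A p q := p.bind fun s => q.bind fun t => restrict S (.app A s t)
  lam p := p.bind fun s => restrict S (.lam s)

theorem fold_restrictAlgebra {S : Set (Code ν)} {k : ℕ} (hS : ∀ t ∈ S, t.subterms ⊆ S)
    (hk : ∀ n, .var n ∈ S → n < k) {t : Code ν} (ht : t ∈ S) :
    (restrictAlgebra S k).fold t = some ⟨t, ht⟩ := by
  induction t with
  | var n =>
    have hn : (n : ZMod k).val = n := ZMod.val_natCast_of_lt (hk n ht)
    simp only [CodeAlgebra.fold, restrictAlgebra, hn, restrict_of_mem ht]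
  | app A s t ihs iht =>
    have hs : s ∈ S := hS _ ht (.inr (.inl s.mem_subterms_self))
    have ht' : t ∈ S := hS _ ht (.inr (.inr t.mem_subterms_self))
    rw [CodeAlgebra.fold, ihs hs, iht ht']
    exact restrict_of_mem ht
  | lam t ih =>
    have ht' : t ∈ S := hS _ ht (.inr t.mem_subterms_self)
    rw [CodeAlgebra.fold, ih ht']
    exact restrict_of_mem ht

theorem exists_finite_algebra_fold_ne {s t : Code ν} (h : s ≠ t) :
    ∃ (k : ℕ) (_ : NeZero k) (Q : Type) (_ : Finite Q) (M : CodeAlgebra ν (ZMod k) Q),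
      M.fold s ≠ M.fold t := by
  let S : Set (Code ν) := s.subterms ∪ t.subterms
  have hfin : S.Finite := s.finite_subterms.union t.finite_subterms
  have hS : ∀ u ∈ S, u.subterms ⊆ S := by
    rintro u (hu | hu)
    · exact (subterms_subset_of_mem hu).trans Set.subset_union_left
    · exact (subterms_subset_of_mem hu).trans Set.subset_union_right
  have hvar : Function.Injective (Code.var : ℕ → Code ν) := fun _ _ => Code.var.inj
  obtain ⟨m, hm⟩ := (hfin.preimage hvar.injOn).bddAbove
  have hfold {u : Code ν} (hu : u ∈ S) : (restrictAlgebra S (m + 1)).fold u = some ⟨u, hu⟩ :=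
    fold_restrictAlgebra hS (fun n hn => Nat.lt_succ_of_le (hm hn)) hu
  have : Finite S := hfin
  refine ⟨m + 1, inferInstance, Option S, inferInstance, restrictAlgebra S (m + 1), ?_⟩
  rw [hfold (.inl s.mem_subterms_self), hfold (.inr t.mem_subterms_self)]
  exact fun hst => h (congrArg Subtype.val (Option.some.inj hst))

end Code

/-! ### Finite completeness -/

namespace CodeAlgebra

variable {J Q : Type*} [AddMonoidWithOne J] (M : CodeAlgebra ν J Q)

mutual

/-- Reading back an element of the full type structure over `J → Q` as a family of elements of `Q`
indexed by the first unused variable name. -/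
def reify : ∀ A : Ty ν, Sem (J → Q) A → J → Q
  | .atom _, u => u
  | .arrow A B, F => fun j =>
    M.lam (reify B ((F : Sem (J → Q) A → Sem (J → Q) B) (reflect A fun _ => M.var j)) (j + 1))

/-- The element of the full type structure over `J → Q` denoted by a family of values of a neutral
term. -/
def reflect : ∀ A : Ty ν, (J → Q) → Sem (J → Q) A
  | .atom _, u => u
  | .arrow A B, u => fun a : Sem (J → Q) A => reflect B fun j => M.app A (u j) (reify A a j)

end

/-- The valuation of every variable by itself. -/
def reflectEnv (Γ : Ctx ν) : Env (J → Q) Γ := fun A v => M.reflect A fun _ => M.var v.level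

theorem reflectEnv_cons (Γ : Ctx ν) (A : Ty ν) :
    M.reflectEnv (A :: Γ)
      = Env.cons (M.reflect A fun _ => M.var (Γ.length : J)) (M.reflectEnv Γ) := by
  funext B v
  cases v <;> rfl

mutual

theorem exists_eval_eq_reflect : ∀ {Γ : Ctx ν} {A : Ty ν} {t : Tm Γ A}, t.IsNeutral →
    ∃ u, t.eval (M.reflectEnv Γ) = M.reflect A u ∧ u Γ.length = M.fold t.code
  | _, _, _, .var _ => ⟨_, rfl, rfl⟩
  | Γ, _, _, .app (A := A) (a := a) hf ha => by
    obtain ⟨u, hu, huf⟩ := exists_eval_eq_reflect hf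
    refine ⟨fun j => M.app A (u j) (M.reify A (a.eval (M.reflectEnv Γ)) j), ?_, ?_⟩
    · rw [Tm.eval, hu]
      rfl
    · exact congrArg₂ (M.app A) huf (reify_eval ha)

theorem reify_eval : ∀ {Γ : Ctx ν} {A : Ty ν} {t : Tm Γ A}, t.IsNormal →
    M.reify A (t.eval (M.reflectEnv Γ)) Γ.length = M.fold t.code
  | _, _, _, .neutral h => by
    obtain ⟨u, hu, hut⟩ := exists_eval_eq_reflect h
    rw [hu]
    exact hut
  | Γ, _, _, .lam (A := A) h => by
    have hb := reify_eval h
    rw [reflectEnv_cons, List.length_cons, Nat.cast_succ] at hb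
    exact congrArg M.lam hb

end

end CodeAlgebra

theorem exists_finite_eval_ne {a b : Tm Γ A} (h : ¬ Eqv a b) :
    ∃ (X : Type) (_ : Finite X) (_ : Nonempty X) (ρ : Env X Γ), a.eval ρ ≠ b.eval ρ := by
  obtain ⟨n, hn, han⟩ := a.exists_isNormal_eqv
  obtain ⟨m, hm, hbm⟩ := b.exists_isNormal_eqv
  have hcode : n.code ≠ m.code := by
    intro hnm
    rw [Tm.code_injective hnm] at han
    exact h (han.trans hbm.symm)
  obtain ⟨k, _, Q, _, M, hM⟩ := Code.exists_finite_algebra_fold_ne hcode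
  refine ⟨ZMod k → Q, inferInstance, ⟨fun _ => M.fold n.code⟩, M.reflectEnv Γ, fun hab => hM ?_⟩
  rw [han.eval_eq, hbm.eval_eq] at hab
  rw [← M.reify_eval hn, ← M.reify_eval hm, hab]

/-! ### Lists of arguments -/

/-- Lists of arguments that turn a term of type `T` into a term of type `U`. In contrast to `HList`,
indexing by both types keeps equations between types out of the constructions. -/
inductive Args (Γ : Ctx ν) : Ty ν → Ty ν → Type
  | nil {T : Ty ν} : Args Γ T T
  | cons {B T U : Ty ν} : Tm Γ B → Args Γ T U → Args Γ (.arrow B T) U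

namespace Args

variable {T U V : Ty ν}

/-- Iterated application. -/
def apply : ∀ {T : Ty ν}, Args Γ T U → Tm Γ T → Tm Γ U
  | _, .nil, t => t
  | _, .cons h s, t => s.apply (t.app h)

/-- Concatenation of lists of arguments. -/
def append : ∀ {T : Ty ν}, Args Γ T U → Args Γ U V → Args Γ T V
  | _, .nil, s' => s'
  | _, .cons h s, s' => .cons h (s.append s')

theorem apply_append (s : Args Γ T U) (s' : Args Γ U V) (t : Tm Γ T) :
    (s.append s').apply t = s'.apply (s.apply t) := by
  induction s with
  | nil => rfl
  | cons _ _ ih => exact ih s' _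

theorem apply_congr (s : Args Γ T U) {t t' : Tm Γ T} (h : Eqv t t') :
    Eqv (s.apply t) (s.apply t') := by
  induction s with
  | nil => exact h
  | cons a _ ih => exact ih (h.app_left a)

theorem exists_apps_eq_apply (s : Args Γ T U) :
    ∃ (Bs : List (Ty ν)) (hs : HList Γ Bs) (he : T = Ty.arrsR Bs U),
      ∀ t : Tm Γ T, Tm.apps (he ▸ t) hs = s.apply t := by
  induction s with
  | nil => exact ⟨[], .nil, rfl, fun _ => rfl⟩
  | cons h s ih =>
    obtain ⟨Bs, hs, rfl, happs⟩ := ih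
    exact ⟨_ :: Bs, .cons h hs, rfl, fun t => happs (t.app h)⟩

/-- The values of a closing substitution, as arguments for `Tm.lamAll`. -/
def ofSubst : ∀ {Γ : Ctx ν} {C : Ty ν}, Subst Γ [] → Args [] (Ty.arrs Γ C) C
  | [], _, _ => .nil
  | A :: _, _, τ => (ofSubst fun B v => τ B (.vs v)).append (.cons (τ A .vz) .nil)

theorem apply_ofSubst_lamAll (τ : Subst Γ []) (t : Tm Γ C) :
    Eqv ((ofSubst τ).apply t.lamAll) (t.subst τ) := by
  induction Γ generalizing C with
  | nil =>
    have hτ : τ = fun _ v => .var v := by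
      funext B v
      exact nomatch v
    rw [hτ, t.subst_var]
    exact .refl t
  | cons A Γ ih =>
    have hτ : Subst.cons (τ A .vz) (fun B v => τ B (.vs v)) = τ := by
      funext B v
      cases v <;> rfl
    calc (ofSubst τ).apply t.lamAll
        = ((ofSubst fun B v => τ B (.vs v)).apply t.lam.lamAll).app (τ A .vz) :=
          apply_append _ _ _
      Eqv _ ((t.lam.subst _).app (τ A .vz)) := (ih _ t.lam).app_left _
      Eqv _ (t.subst τ) := .beta_of_eq (by rw [Tm.subst1_subst_ext, hτ])

end Args

/-! ### Projections and definition by cases -/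

/-- The type `D → ⋯ → D → D` of `n`-ary operations on `D`. -/
def Ty.nary (D : Ty ν) : ℕ → Ty ν
  | 0 => D
  | n + 1 => .arrow D (D.nary n)

variable {D T : Ty ν}

/-- The arguments `c 0, …, c (n - 1)` of an `n`-ary operation. -/
def Args.ofFn : ∀ {n : ℕ}, (Fin n → Tm Γ D) → Args Γ (D.nary n) D
  | 0, _ => .nil
  | _ + 1, c => .cons (c 0) (ofFn fun i => c i.succ)

theorem Args.subst_apply_ofFn {n : ℕ} (c : Fin n → Tm Γ D) (t : Tm Γ (D.nary n))
    (σ : Subst Γ Δ) :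
    ((ofFn c).apply t).subst σ = (ofFn fun i => (c i).subst σ).apply (t.subst σ) := by
  induction n with
  | zero => rfl
  | succ n ih => exact ih _ _

namespace Tm

/-- The constant `n`-ary operation `λx₁ … xₙ. d`. -/
def const : ∀ (n : ℕ) {Γ : Ctx ν}, Tm Γ D → Tm Γ (D.nary n)
  | 0, _, d => d
  | n + 1, _, d => .lam (const n (d.rename fun _ => Var.vs))

theorem const_subst (n : ℕ) (d : Tm Γ D) (σ : Subst Γ Δ) :
    (const n d).subst σ = const n (d.subst σ) := by
  induction n generalizing Γ Δ with
  | zero => rfl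
  | succ n ih =>
    change Tm.lam ((const n _).subst _) = Tm.lam (const n _)
    rw [ih, weaken_subst_ext]

theorem apply_ofFn_const {n : ℕ} (c : Fin n → Tm Γ D) (d : Tm Γ D) :
    Eqv ((Args.ofFn c).apply (const n d)) d := by
  induction n with
  | zero => exact .refl d
  | succ n ih =>
    have h : Eqv ((const (n + 1) d).app (c 0)) (const n d) :=
      .beta_of_eq (by rw [subst1, const_subst]; exact congrArg (const n) (d.subst1_weaken _))
    exact ((Args.ofFn _).apply_congr h).trans (ih _)

/-- The projections `λx₁ … xₙ. xᵢ`. -/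
def proj : ∀ {n : ℕ} {Γ : Ctx ν}, Fin n → Tm Γ (D.nary n)
  | n + 1, _, ⟨0, _⟩ => .lam (const n (.var .vz))
  | _ + 1, _, ⟨i + 1, h⟩ => .lam (proj ⟨i, Nat.lt_of_succ_lt_succ h⟩)

theorem proj_subst {n : ℕ} (i : Fin n) (σ : Subst Γ Δ) :
    (proj (D := D) i).subst σ = proj i := by
  induction n generalizing Γ Δ with
  | zero => exact i.elim0
  | succ n ih =>
    cases i using Fin.cases with
    | zero => exact congrArg Tm.lam (const_subst n (.var .vz) _)
    | succ i => exact congrArg Tm.lam (ih i _)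

theorem proj_rename {n : ℕ} (i : Fin n) (ρ : Ren Γ Δ) :
    (proj (D := D) i).rename ρ = proj i := by
  rw [rename_eq_subst, proj_subst]

theorem apply_ofFn_proj {n : ℕ} (c : Fin n → Tm Γ D) (i : Fin n) :
    Eqv ((Args.ofFn c).apply (proj i)) (c i) := by
  induction n with
  | zero => exact i.elim0
  | succ n ih =>
    cases i using Fin.cases with
    | zero =>
      have h : Eqv (Tm.app (proj (n := n + 1) 0) (c 0)) (const n (c 0)) :=
        .beta_of_eq (const_subst n (.var .vz) _)
      exact ((Args.ofFn _).apply_congr h).trans (apply_ofFn_const _ _)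
    | succ i =>
      have h : Eqv (Tm.app (proj i.succ) (c 0)) (proj i) := .beta_of_eq (proj_subst i _)
      exact ((Args.ofFn _).apply_congr h).trans (ih _ i)

end Tm

/-- `T.EndsIn D` says that `T` has the form `B₁ → ⋯ → Bₖ → D`. It lives in `Type` so that terms can
be defined by recursion on it. -/
inductive Ty.EndsIn : Ty ν → Ty ν → Type
  | refl (D : Ty ν) : EndsIn D D
  | arrow {D B : Ty ν} (A : Ty ν) : EndsIn B D → EndsIn (.arrow A B) D

namespace Tm

/-- Definition by cases at a type `B₁ → ⋯ → Bₖ → D`: the term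
`λy₁ … yₖ. x (c₁ y₁ … yₖ) … (cₙ y₁ … yₖ)`. -/
def cases {n : ℕ} : ∀ {T : Ty ν} {Γ : Ctx ν},
    T.EndsIn D → (Fin n → Tm Γ T) → Tm Γ (D.nary n) → Tm Γ T
  | _, _, .refl _, c, x => (Args.ofFn c).apply x
  | _, _, .arrow _ h, c, x =>
    .lam (cases h (fun i => ((c i).rename fun _ => Var.vs).app (.var .vz))
      (x.rename fun _ => Var.vs))

theorem cases_subst {n : ℕ} (h : T.EndsIn D) (c : Fin n → Tm Γ T) (x : Tm Γ (D.nary n))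
    (σ : Subst Γ Δ) : (cases h c x).subst σ = cases h (fun i => (c i).subst σ) (x.subst σ) := by
  induction h generalizing Γ Δ with
  | refl D => exact Args.subst_apply_ofFn c x σ
  | arrow A h ih =>
    simp only [cases, subst, ih, weaken_subst_ext]
    rfl

theorem cases_congr {n : ℕ} (h : T.EndsIn D) (c : Fin n → Tm Γ T) {x y : Tm Γ (D.nary n)}
    (hxy : Eqv x y) : Eqv (cases h c x) (cases h c y) := by
  induction h generalizing Γ with
  | refl D => exact (Args.ofFn c).apply_congr hxy
  | arrow A h ih => exact .congLam (ih _ (hxy.rename _))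

theorem cases_proj {n : ℕ} (h : T.EndsIn D) (c : Fin n → Tm Γ T) (i : Fin n) :
    Eqv (cases h c (proj i)) (c i) := by
  induction h generalizing Γ with
  | refl D => exact apply_ofFn_proj c i
  | arrow A h ih =>
    rw [cases, proj_rename]
    exact (Eqv.congLam (ih _)).trans (.eta _)

/-- The term `λs. w (s a) s`, which chooses by means of `w`, according to the value of `s` at `a`, a
term to be applied to `s`. -/
def probe (w : Tm Γ (.arrow B (.arrow (.arrow A B) T))) (a : Tm Γ A) :
    Tm Γ (.arrow (.arrow A B) T) :=
  .lam (((w.rename fun _ => Var.vs).app (.app (.var .vz) (a.rename fun _ => Var.vs))).app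
    (.var .vz))

theorem probe_app (w : Tm Γ (.arrow B (.arrow (.arrow A B) T))) (a : Tm Γ A)
    (s : Tm Γ (.arrow A B)) : Eqv ((probe w a).app s) ((w.app (s.app a)).app s) := by
  refine .beta_of_eq ?_
  change ((Tm.subst1 (w.rename _) s).app (s.app (Tm.subst1 (a.rename _) s))).app s = _
  rw [subst1_weaken, subst1_weaken]

end Tm

/-! ### Definability in finite full type structures -/

/-- The type instance in which every atomic type becomes the type of `n`-ary operations on `D`. -/
abbrev Ty.toNary (A D : Ty ν) (n : ℕ) : Ty ν := A.substA fun _ => D.nary n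

/-- The type of `n`-ary operations on `D` ends in `D`. -/
def Ty.EndsIn.nary (D : Ty ν) : ∀ n : ℕ, (D.nary n).EndsIn D
  | 0 => .refl D
  | n + 1 => .arrow D (nary D n)

section Definability

variable {X : Type*} {n : ℕ} (e : X ≃ Fin n)

/-- The logical relation between closed terms and elements of the full type structure over `X` that
represents the elements of `X`, enumerated by `e`, by projections. -/
def Represents : ∀ A : Ty ν, Tm [] (A.toNary D n) → Sem X A → Prop
  | .atom _, t, x => Eqv t (.proj (e x))
  | .arrow A B, t, F => ∀ (s : Tm [] (A.toNary D n)) (d : Sem X A),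
      Represents A s d → Represents B (Tm.app t s) ((F : Sem X A → Sem X B) d)

/-- Functions on the elements of type `A`, with values in any type that ends in `D`, can be defined
by a term acting on representatives. The type of the values varies because at an arrow type the
cases are terms still to be applied to the representative. -/
def HasCases (D : Ty ν) (A : Ty ν) : Prop :=
  ∀ (T : Ty ν) (_ : T.EndsIn D) (t : Sem X A → Tm [] T),
    ∃ u : Tm [] (.arrow (A.toNary D n) T), ∀ s d, Represents e A s d → Eqv (u.app s) (t d)

variable {e}

theorem Represents.of_eqv {t t' : Tm [] (A.toNary D n)} {d : Sem X A} (h : Eqv t t')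
    (ht : Represents e A t d) : Represents e A t' d := by
  induction A with
  | atom => exact h.symm.trans ht
  | arrow A B _ ih => exact fun s a hs => ih (h.app_left s) (ht s a hs)

theorem HasCases.atom (p : ν) : HasCases e D (.atom p) := by
  intro T hT t
  let c (i : Fin n) : Tm [] T := t (e.symm i)
  refine ⟨.lam (.cases hT (fun i => (c i).rename fun _ => Var.vs) (.var .vz)), fun s x hs => ?_⟩
  calc Eqv _ (Tm.cases hT c s) := .beta_of_eq (by
        rw [Tm.subst1, Tm.cases_subst]
        exact congrArg (Tm.cases hT · s) (funext fun i => (c i).subst1_weaken s))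
    Eqv _ (Tm.cases hT c (.proj (e x))) := Tm.cases_congr hT c hs
    Eqv _ (c (e x)) := Tm.cases_proj hT c (e x)
    _ = t x := congrArg t (e.symm_apply_apply x)

theorem HasCases.exists_of_dependsOn [Nonempty (Sem X B)]
    (hA : ∀ d : Sem X A, ∃ s : Tm [] (A.toNary D n), Represents e A s d) (hB : HasCases e D B)
    (hT : T.EndsIn D) (S : Finset (Sem X A)) (t : (Sem X A → Sem X B) → Tm [] T)
    (ht : DependsOn t S) :
    ∃ u : Tm [] (.arrow ((Ty.arrow A B).toNary D n) T),
      ∀ s (F : Sem X A → Sem X B), Represents e (.arrow A B) s F → Eqv (u.app s) (t F) := by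
  classical
  induction S using Finset.induction_on generalizing t with
  | empty =>
    obtain ⟨b⟩ := ‹Nonempty (Sem X B)›
    refine ⟨.lam ((t fun _ => b).rename fun _ => Var.vs), fun s F _ => ?_⟩
    rw [ht (x := F) (y := fun _ => b) (by simp)]
    exact .lam_weaken_app _ s
  | insert a S ha ih =>
    -- Once the value of `F` at `a` is known to be `b`, only its values on `S` matter.
    have hupdate (b : Sem X B) : DependsOn (fun F => t (Function.update F a b)) S := by
      simpa only [Finset.erase_insert ha] using ht.update a b
    choose u hu using fun b => ih _ (hupdate b)
    obtain ⟨w, hw⟩ := hB _ (.arrow _ hT) u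
    obtain ⟨r, hr⟩ := hA a
    refine ⟨Tm.probe w r, fun s F hs => ?_⟩
    calc Eqv _ ((w.app (s.app r)).app s) := Tm.probe_app w r s
      Eqv _ ((u (F a)).app s) := (hw _ _ (hs r a hr)).app_left s
      Eqv _ (t (Function.update F a (F a))) := hu (F a) s F hs
      _ = t F := by rw [Function.update_eq_self]

theorem HasCases.arrow [Finite (Sem X A)] [Nonempty (Sem X B)]
    (hA : ∀ d : Sem X A, ∃ s : Tm [] (A.toNary D n), Represents e A s d) (hB : HasCases e D B) :
    HasCases e D (.arrow A B) := by
  intro T hT t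
  have := Fintype.ofFinite (Sem X A)
  refine HasCases.exists_of_dependsOn hA hB hT Finset.univ t ?_
  rw [Finset.coe_univ]
  exact dependsOn_univ t

/-- The types of the representatives end in `D`. -/
def Ty.EndsIn.toNary (D : Ty ν) (n : ℕ) : ∀ A : Ty ν, (A.toNary D n).EndsIn D
  | .atom _ => nary D n
  | .arrow _ B => .arrow _ (toNary D n B)

theorem HasCases.exists_represents_arrow (hA : HasCases e D A)
    (hB : ∀ d : Sem X B, ∃ s : Tm [] (B.toNary D n), Represents e B s d) (F : Sem X (.arrow A B)) :
    ∃ t : Tm [] ((Ty.arrow A B).toNary D n), Represents e (.arrow A B) t F := by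
  choose r hr using hB
  obtain ⟨t, ht⟩ := hA _ (.toNary D n B) fun d => r ((F : Sem X A → Sem X B) d)
  exact ⟨t, fun s d hs => (hr _).of_eqv (ht s d hs).symm⟩

variable (D e)

theorem exists_represents_and_hasCases [Nonempty X] (A : Ty ν) :
    (∀ d : Sem X A, ∃ t : Tm [] (A.toNary D n), Represents e A t d) ∧ HasCases e D A := by
  have : Finite X := .intro e
  induction A with
  | atom p => exact ⟨fun x => ⟨.proj (e x), .refl _⟩, HasCases.atom p⟩
  | arrow A B ihA ihB =>
    exact ⟨ihA.2.exists_represents_arrow ihB.1, .arrow ihA.1 ihB.2⟩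

theorem exists_represents [Nonempty X] (d : Sem X A) :
    ∃ t : Tm [] (A.toNary D n), Represents e A t d :=
  (exists_represents_and_hasCases D e A).1 d

theorem exists_subst_represents [Nonempty X] (ρ : Env X Γ) :
    ∃ τ : Subst (Γ.map fun A => A.toNary D n) [],
      ∀ A (v : Var Γ A), Represents e A (τ _ (v.substA _)) (ρ A v) := by
  induction Γ with
  | nil => exact ⟨fun _ v => v.elim0, fun _ v => v.elim0⟩
  | cons A Γ ih =>
    obtain ⟨τ, hτ⟩ := ih fun B v => ρ B (.vs v)
    obtain ⟨t, ht⟩ := exists_represents D e (ρ A .vz)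
    refine ⟨Subst.cons t τ, fun B v => ?_⟩
    cases v with
    | vz => exact ht
    | vs w => exact hτ B w

variable {D e} in
theorem Represents.subst (a : Tm Γ A) {τ : Subst (Γ.map fun A => A.toNary D n) []}
    {ρ : Env X Γ} (h : ∀ A (v : Var Γ A), Represents e A (τ _ (v.substA _)) (ρ A v)) :
    Represents e A ((a.substA fun _ => D.nary n).subst τ) (a.eval ρ) := by
  induction a with
  | var v => exact h _ v
  | app _ _ ihf iha => exact ihf h _ _ (iha h)
  | lam b ih =>
    intro s d hs
    have hb : Represents e _ ((b.substA fun _ => D.nary n).subst (Subst.cons s τ))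
        (b.eval (Env.cons d ρ)) := by
      refine ih fun B v => ?_
      cases v with
      | vz => exact hs
      | vs w => exact h B w
    exact hb.of_eqv (Eqv.beta_of_eq (Tm.subst1_subst_ext _ _ _)).symm

theorem exists_args_separating [Nonempty X] {d d' : Sem X A} (h : d ≠ d') :
    ∃ (s : Args [] (A.toNary D n) (D.nary n)) (i j : Fin n), i ≠ j ∧
      (∀ t, Represents e A t d → Eqv (s.apply t) (.proj i)) ∧
      ∀ t, Represents e A t d' → Eqv (s.apply t) (.proj j) := by
  induction A with
  | atom p => exact ⟨.nil, e d, e d', e.injective.ne h, fun _ ht => ht, fun _ ht => ht⟩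
  | arrow A B _ ih =>
    obtain ⟨a, ha⟩ := Function.ne_iff.1 h
    obtain ⟨r, hr⟩ := exists_represents D e a
    obtain ⟨s, i, j, hij, hi, hj⟩ := ih ha
    exact ⟨.cons r s, i, j, hij, fun t ht => hi _ (ht r a hr), fun t ht => hj _ (ht r a hr)⟩

end Definability

/-! ### Separation -/

theorem exists_args_eqv {a b : Tm Γ A} (hne : ¬ Eqv a b) (p q : Tm [] D) :
    ∃ (σ : ν → Ty ν) (s : Args [] (Ty.arrs (Γ.map (Ty.substA σ)) (A.substA σ)) D),
      Eqv (s.apply (a.substA σ).lamAll) p ∧ Eqv (s.apply (b.substA σ).lamAll) q := by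
  obtain ⟨X, _, _, ρ, hρ⟩ := exists_finite_eval_ne hne
  let e := Finite.equivFin X
  obtain ⟨τ, hτ⟩ := exists_subst_represents D e ρ
  obtain ⟨s, i, j, hij, hi, hj⟩ := exists_args_separating D e hρ
  let c (k : Fin (Nat.card X)) : Tm [] D := if k = i then p else q
  have reduces {t : Tm Γ A} {k : Fin (Nat.card X)}
      (hk : Eqv (s.apply ((t.substA fun _ => D.nary (Nat.card X)).subst τ)) (.proj k)) :
      Eqv (((Args.ofSubst τ).append (s.append (.ofFn c))).apply (t.substA _).lamAll) (c k) := by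
    rw [Args.apply_append, Args.apply_append]
    calc Eqv _ ((Args.ofFn c).apply (s.apply ((t.substA _).subst τ))) :=
          Args.apply_congr _ (s.apply_congr (Args.apply_ofSubst_lamAll τ _))
      Eqv _ ((Args.ofFn c).apply (.proj k)) := Args.apply_congr _ hk
      Eqv _ (c k) := Tm.apply_ofFn_proj c k
  have hp : c i = p := if_pos rfl
  have hq : c j = q := if_neg hij.symm
  exact ⟨_, _, hp ▸ reduces (hi _ (.subst a hτ)), hq ▸ reduces (hj _ (.subst b hτ))⟩

namespace Tm

/-- The term `λx y. x`. -/
def fst : Tm Γ (.arrow A (.arrow A A)) := .lam (.lam (.var (.vs .vz)))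

/-- The term `λx y. y`. -/
def snd : Tm Γ (.arrow A (.arrow A A)) := .lam (.lam (.var .vz))

theorem fst_app_app (e f : Tm Γ A) : Eqv ((fst.app e).app f) e :=
  ((Eqv.beta _ e).app_left f).trans (.lam_weaken_app e f)

theorem snd_app_app (e f : Tm Γ A) : Eqv ((snd.app e).app f) f :=
  ((Eqv.beta _ e).app_left f).trans (.beta _ f)

end Tm

theorem boehm_typed_lambda_refined_general {a b : Tm Γ A} (hne : ¬ Eqv a b) (E : Ty ν) :
    ∃ (σ : ν → Ty ν) (Bs : List (Ty ν)) (hs : HList ([] : Ctx ν) Bs)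
      (he : Ty.arrs (Γ.map (Ty.substA σ)) (A.substA σ)
              = Ty.arrsR Bs (Ty.arrow E (Ty.arrow E E))),
      ∀ {Δ : Ctx ν} (e f : Tm Δ E),
        Eqv (((Tm.apps (he ▸ Tm.lamAll (a.substA σ)) hs).wk.app e).app f) e ∧
        Eqv (((Tm.apps (he ▸ Tm.lamAll (b.substA σ)) hs).wk.app e).app f) f := by
  obtain ⟨σ, s, ha, hb⟩ := exists_args_eqv hne (D := .arrow E (.arrow E E)) Tm.fst Tm.snd
  obtain ⟨Bs, hs, he, happs⟩ := s.exists_apps_eq_apply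
  refine ⟨σ, Bs, hs, he, fun e f => ?_⟩
  rw [happs, happs]
  exact ⟨(((ha.rename _).app_left e).app_left f).trans (Tm.fst_app_app e f),
    (((hb.rename _).app_left e).app_left f).trans (Tm.snd_app_app e f)⟩

/--
**Theorem 6.2.** If `a` and `b` are of the same type and `a = b` is not provable in Λ,
then for every two terms `e` and `f` of the same type one can construct type-instances
`a′` and `b′` of `a` and `b` respectively, and closed terms `h₁, …, h_l` (`l ≥ 0`), and
also find variables `x₁, …, xₘ` (`m ≥ 0`, here: all the free variables of `a` and `b`,
i.e. the context `Γ`), such that `(λx₁…xₘ.a′)h₁…h_l e f = e` and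
`(λx₁…xₘ.b′)h₁…h_l e f = f` are provable in Λ.
-/
theorem boehm_typed_lambda_refined {ν : Type} [Nonempty ν] {Γ : Ctx ν} {A : Ty ν}
    (a b : Tm Γ A) (hne : ¬ Eqv a b) {Δ : Ctx ν} {E : Ty ν} (e f : Tm Δ E) :
    ∃ (σ : ν → Ty ν) (Bs : List (Ty ν)) (hs : HList ([] : Ctx ν) Bs)
      (he : Ty.arrs (Γ.map (Ty.substA σ)) (A.substA σ)
              = Ty.arrsR Bs (Ty.arrow E (Ty.arrow E E))),
      Eqv (((Tm.apps (he ▸ Tm.lamAll (a.substA σ)) hs).wk.app e).app f) e ∧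
      Eqv (((Tm.apps (he ▸ Tm.lamAll (b.substA σ)) hs).wk.app e).app f) f :=
  let ⟨σ, Bs, hs, he, h⟩ := boehm_typed_lambda_refined_general hne E
  ⟨σ, Bs, hs, he, h e f⟩
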